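/- arXiv:0905.1236 — 2 statements merged into one kernel-verified Lean document; each statement's English description precedes it below -/
import Mathlib

section
/- The Coulomb interaction between two 1s clouds with different exponents satisfies (11|33)-type formula: ∫∫ φ_{1s}(x)² φ_{2p₃}(y)² / |x−y| dx dy = Z₁Z₃(8Z₁⁴ + 20Z₁³Z₃ + 20Z₁²Z₃² + 10Z₁Z₃³ + Z₃⁴) / (2Z₁+Z₃)⁵. -/
open MeasureTheory Real

/-!
Slicing a three-dimensional Euclidean space orthogonally to a unit vector `e` gives Archimedes'
hat-box theorem: on the sphere of radius `r`, the coordinate `⟪e, x⟫` is spread over `(-r, r)` with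
constant density `2πr`. Since `‖x - y‖²` is an affine function of the coordinate of `x` along `y`,
integrating `‖x - y‖⁻¹` over that density yields Newton's shell theorem, and hence the potential of
an exponential cloud in closed form. Integrating this potential against the second cloud, again by
the hat-box theorem, leaves a combination of Gamma integrals. All integrands are nonnegative, so
the order of integration is free.
-/

open Set Filter Module
open scoped ENNReal InnerProductSpace Topology

theorem lintegral_Ioo_ofReal_deriv {f f' : ℝ → ℝ} {a b : ℝ} (hab : a ≤ b)
    (hcont : ContinuousOn f (Icc a b)) (hderiv : ∀ x ∈ Ioo a b, HasDerivAt f (f' x) x)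
    (hnonneg : ∀ x ∈ Ioo a b, 0 ≤ f' x) :
    ∫⁻ x in Ioo a b, ENNReal.ofReal (f' x) = ENNReal.ofReal (f b - f a) := by
  have hint : IntegrableOn f' (Ioc a b) :=
    intervalIntegral.integrableOn_deriv_of_nonneg hcont hderiv hnonneg
  rw [← ofReal_integral_eq_lintegral_ofReal (hint.mono_set Ioo_subset_Ioc_self)
      (ae_restrict_of_forall_mem measurableSet_Ioo hnonneg),
    ← integral_Ioc_eq_integral_Ioo, ← intervalIntegral.integral_of_le hab,
    intervalIntegral.integral_eq_sub_of_hasDerivAt_of_le hab hcont hderiv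
      ((intervalIntegrable_iff_integrableOn_Ioc_of_le hab).2 hint)]

theorem lintegral_Ioo_inv_sqrt {r d : ℝ} (hr : 0 < r) (hd : 0 < d) :
    ∫⁻ z in Ioo (-r) r, ENNReal.ofReal (√(r ^ 2 + d ^ 2 - 2 * d * z))⁻¹ =
      ENNReal.ofReal (2 * r / max r d) := by
  have hpos : ∀ z ∈ Ioo (-r) r, 0 < r ^ 2 + d ^ 2 - 2 * d * z := fun z hz => by
    nlinarith [sq_nonneg (r - d), mul_pos hd (sub_pos.2 hz.2)]
  have hderiv : ∀ z ∈ Ioo (-r) r, HasDerivAt (fun z => -√(r ^ 2 + d ^ 2 - 2 * d * z) / d)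
      (√(r ^ 2 + d ^ 2 - 2 * d * z))⁻¹ z := fun z hz => by
    have h := (((hasDerivAt_const_mul (2 * d)).const_sub
      (r ^ 2 + d ^ 2)).sqrt (hpos z hz).ne').neg.div_const d
    exact h.congr_deriv (by field_simp)
  have hfar : r ^ 2 + d ^ 2 - 2 * d * -r = (r + d) ^ 2 := by ring
  have hnear : r ^ 2 + d ^ 2 - 2 * d * r = (r - d) ^ 2 := by ring
  rw [lintegral_Ioo_ofReal_deriv (by linarith) (by fun_prop) hderiv
    fun z _ => inv_nonneg.2 (sqrt_nonneg _), hfar, hnear, sqrt_sq (add_pos hr hd).le,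
    sqrt_sq_eq_abs]
  congr 1
  rcases le_total r d with h | h
  · rw [max_eq_right h, abs_of_nonpos (by linarith)]
    ring
  · rw [max_eq_left h, abs_of_nonneg (by linarith)]
    field_simp
    ring

theorem lintegral_Ioo_sq {r : ℝ} (hr : 0 ≤ r) :
    ∫⁻ z in Ioo (-r) r, ENNReal.ofReal (z ^ 2) = ENNReal.ofReal (2 / 3 * r ^ 3) := by
  rw [lintegral_Ioo_ofReal_deriv (f := fun z => z ^ 3 / 3) (by linarith) (by fun_prop)
    (fun z _ => ((hasDerivAt_pow 3 z).div_const 3).congr_deriv (by norm_num))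
    fun z _ => sq_nonneg z]
  congr 1
  ring

theorem integral_integral_eq_of_lintegral_lintegral {α β : Type*} [MeasurableSpace α]
    [MeasurableSpace β] {μ : Measure α} {ν : Measure β} [SFinite μ] [SFinite ν] {f : α → β → ℝ}
    (hf : AEStronglyMeasurable (Function.uncurry f) (μ.prod ν)) (hnonneg : ∀ x y, 0 ≤ f x y)
    {c : ℝ} (hc : 0 ≤ c)
    (h : ∫⁻ y, ∫⁻ x, ENNReal.ofReal (f x y) ∂μ ∂ν = ENNReal.ofReal c) :
    ∫ x, ∫ y, f x y ∂ν ∂μ = c := by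
  have hprod : ∫⁻ p, ENNReal.ofReal (Function.uncurry f p) ∂μ.prod ν = ENNReal.ofReal c := by
    rw [lintegral_prod_symm _ hf.aemeasurable.ennreal_ofReal, ← h]
    rfl
  have hnonneg' : 0 ≤ᵐ[μ.prod ν] Function.uncurry f := ae_of_all _ fun p => hnonneg p.1 p.2
  have hint : Integrable (Function.uncurry f) (μ.prod ν) :=
    ⟨hf, (hasFiniteIntegral_iff_ofReal hnonneg').2 (hprod ▸ ENNReal.ofReal_lt_top)⟩
  rw [integral_integral hint]
  exact (integral_eq_lintegral_of_nonneg_ae hnonneg' hf).trans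
    (by rw [hprod, ENNReal.toReal_ofReal hc])

theorem image_sqrt_sq_add_sq_Ioi (z : ℝ) : (fun ρ => √(z ^ 2 + ρ ^ 2)) '' Ioi 0 = Ioi |z| := by
  ext r
  simp only [mem_image, mem_Ioi]
  constructor
  · rintro ⟨ρ, hρ, rfl⟩
    rw [← sqrt_sq_eq_abs]
    exact sqrt_lt_sqrt (sq_nonneg z) (lt_add_of_pos_right _ (pow_pos hρ 2))
  · intro hr
    have hr0 : 0 < r := (abs_nonneg z).trans_lt hr
    have hpos : 0 < r ^ 2 - z ^ 2 := sub_pos.2 (sq_lt_sq.2 (by rwa [abs_of_pos hr0]))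
    exact ⟨√(r ^ 2 - z ^ 2), sqrt_pos.2 hpos, by
      rw [sq_sqrt hpos.le, add_sub_cancel, sqrt_sq hr0.le]⟩

theorem lintegral_Ioi_comp_sqrt_sq_add_sq (z : ℝ) (g : ℝ → ℝ≥0∞) :
    ∫⁻ ρ in Ioi 0, ENNReal.ofReal ρ * g √(z ^ 2 + ρ ^ 2) =
      ∫⁻ r in Ioi |z|, ENNReal.ofReal r * g r := by
  have hpos {ρ : ℝ} (hρ : ρ ∈ Ioi 0) : 0 < z ^ 2 + ρ ^ 2 :=
    add_pos_of_nonneg_of_pos (sq_nonneg z) (pow_pos hρ 2)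
  have hderiv : ∀ ρ ∈ Ioi 0, HasDerivWithinAt (fun ρ => √(z ^ 2 + ρ ^ 2))
      (ρ / √(z ^ 2 + ρ ^ 2)) (Ioi 0) ρ := fun ρ hρ => by
    have h := ((hasDerivAt_pow 2 ρ).const_add (z ^ 2)).sqrt (hpos hρ).ne'
    exact (h.congr_deriv (by field_simp; simp)).hasDerivWithinAt
  have hmono : MonotoneOn (fun ρ => √(z ^ 2 + ρ ^ 2)) (Ioi 0) := fun ρ hρ σ _ h =>
    sqrt_le_sqrt (by gcongr; exact hρ.out.le)
  rw [← image_sqrt_sq_add_sq_Ioi z,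
    lintegral_image_eq_lintegral_deriv_mul_of_monotoneOn measurableSet_Ioi hderiv hmono]
  refine setLIntegral_congr_fun measurableSet_Ioi fun ρ hρ => ?_
  have hs := sqrt_pos.2 (hpos hρ)
  rw [← mul_assoc, ← ENNReal.ofReal_mul (div_nonneg hρ.out.le hs.le), div_mul_cancel₀ _ hs.ne']

theorem lintegral_lintegral_Ioi_abs_swap {F : ℝ → ℝ → ℝ≥0∞}
    (hF : Measurable (Function.uncurry F)) :
    ∫⁻ z, ∫⁻ r in Ioi |z|, F z r = ∫⁻ r in Ioi 0, ∫⁻ z in Ioo (-r) r, F z r := by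
  let S : Set (ℝ × ℝ) := {p | |p.1| < p.2}
  have hS : MeasurableSet S := measurableSet_lt (by fun_prop) (by fun_prop)
  calc
    ∫⁻ z, ∫⁻ r in Ioi |z|, F z r = ∫⁻ z, ∫⁻ r, S.indicator (Function.uncurry F) (z, r) := by
      simp_rw [← lintegral_indicator measurableSet_Ioi]
      rfl
    _ = ∫⁻ r, ∫⁻ z, S.indicator (Function.uncurry F) (z, r) :=
      lintegral_lintegral_swap (hF.indicator hS).aemeasurable
    _ = ∫⁻ r, ∫⁻ z in Ioo (-r) r, F z r := by
      simp_rw [← lintegral_indicator measurableSet_Ioo, indicator, S, mem_ofPred_eq, abs_lt,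
        mem_Ioo]
      rfl
    _ = ∫⁻ r in Ioi 0, ∫⁻ z in Ioo (-r) r, F z r := by
      rw [← lintegral_indicator measurableSet_Ioi]
      refine lintegral_congr fun r => ?_
      by_cases hr : 0 < r
      · rw [indicator_of_mem (mem_Ioi.2 hr)]
      · rw [indicator_of_notMem (by simpa using hr), Ioo_eq_empty (by linarith), setLIntegral_empty]

/-- The upper incomplete Gamma function `Γ(n + 1, x) = ∫_x^∞ tⁿ e⁻ᵗ dt`, given by the recursion
that integration by parts yields. -/
noncomputable def upperIncompleteGamma : ℕ → ℝ → ℝ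
  | 0, x => exp (-x)
  | n + 1, x => (n + 1) * upperIncompleteGamma n x + x ^ (n + 1) * exp (-x)

namespace upperIncompleteGamma

theorem apply_zero (n : ℕ) : upperIncompleteGamma n 0 = n.factorial := by
  induction n with
  | zero => simp [upperIncompleteGamma]
  | succ n ih => simp [upperIncompleteGamma, ih, Nat.factorial_succ]

theorem hasDerivAt (n : ℕ) (x : ℝ) :
    HasDerivAt (upperIncompleteGamma n) (-(x ^ n * exp (-x))) x := by
  have hexp : HasDerivAt (fun x => exp (-x)) (-exp (-x)) x := by
    simpa using (hasDerivAt_neg x).exp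
  induction n with
  | zero => simpa using! hexp
  | succ n ih =>
    refine ((ih.const_mul (n + 1 : ℝ)).fun_add
      ((hasDerivAt_pow (n + 1) x).fun_mul hexp)).congr_deriv ?_
    push_cast [add_tsub_cancel_right]
    ring

theorem tendsto_atTop (n : ℕ) : Tendsto (upperIncompleteGamma n) atTop (𝓝 0) := by
  induction n with
  | zero => exact tendsto_exp_neg_atTop_nhds_zero
  | succ n ih =>
    simpa using! (ih.const_mul (n + 1 : ℝ)).add (tendsto_pow_mul_exp_neg_atTop_nhds_zero (n + 1))

variable (n : ℕ) {a : ℝ}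

theorem hasDerivAt_comp_mul_div (ha : a ≠ 0) (r : ℝ) :
    HasDerivAt (fun r => -(upperIncompleteGamma n (a * r) / a ^ (n + 1)))
      (r ^ n * exp (-(a * r))) r := by
  have h := (((hasDerivAt n (a * r)).comp r (hasDerivAt_const_mul a)).div_const (a ^ (n + 1))).neg
  refine h.congr_deriv ?_
  field_simp
  ring

theorem tendsto_comp_mul_div (ha : 0 < a) :
    Tendsto (fun r => -(upperIncompleteGamma n (a * r) / a ^ (n + 1))) atTop (𝓝 0) := by
  simpa using (((tendsto_atTop n).comp (tendsto_id.const_mul_atTop ha)).div_const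
    (a ^ (n + 1))).neg

end upperIncompleteGamma

section ExponentialMoments

variable (n : ℕ) {a d : ℝ}

theorem integrableOn_Ioi_pow_mul_exp_neg_mul (ha : 0 < a) (hd : 0 ≤ d) :
    IntegrableOn (fun r => r ^ n * exp (-(a * r))) (Ioi d) :=
  integrableOn_Ioi_deriv_of_nonneg'
    (fun _ _ => upperIncompleteGamma.hasDerivAt_comp_mul_div n ha.ne' _)
    (fun _ hr => mul_nonneg (pow_nonneg (hd.trans hr.out.le) n) (exp_pos _).le)
    (upperIncompleteGamma.tendsto_comp_mul_div n ha)

theorem integral_Ioi_pow_mul_exp_neg_mul (ha : 0 < a) (hd : 0 ≤ d) :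
    ∫ r in Ioi d, r ^ n * exp (-(a * r)) = upperIncompleteGamma n (a * d) / a ^ (n + 1) := by
  rw [integral_Ioi_of_hasDerivAt_of_tendsto'
    (fun r _ => upperIncompleteGamma.hasDerivAt_comp_mul_div n ha.ne' r)
    (integrableOn_Ioi_pow_mul_exp_neg_mul n ha hd)
    (upperIncompleteGamma.tendsto_comp_mul_div n ha), zero_sub, neg_neg]

theorem integral_Ioi_zero_pow_mul_exp_neg_mul (ha : 0 < a) :
    ∫ r in Ioi 0, r ^ n * exp (-(a * r)) = n.factorial / a ^ (n + 1) := by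
  rw [integral_Ioi_pow_mul_exp_neg_mul n ha le_rfl, mul_zero, upperIncompleteGamma.apply_zero]

theorem integral_Ioc_pow_mul_exp_neg_mul (ha : 0 < a) (hd : 0 ≤ d) :
    ∫ r in Ioc 0 d, r ^ n * exp (-(a * r)) =
      (n.factorial - upperIncompleteGamma n (a * d)) / a ^ (n + 1) := by
  have hint := integrableOn_Ioi_pow_mul_exp_neg_mul n ha le_rfl
  have hsplit := setIntegral_union Ioc_disjoint_Ioi_same measurableSet_Ioi
    (hint.mono_set Ioc_subset_Ioi_self) (hint.mono_set (Ioi_subset_Ioi hd))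
  rw [Ioc_union_Ioi_eq_Ioi hd, integral_Ioi_zero_pow_mul_exp_neg_mul n ha,
    integral_Ioi_pow_mul_exp_neg_mul n ha hd] at hsplit
  rw [sub_div, hsplit, add_sub_cancel_right]

end ExponentialMoments

/-- The Coulomb potential, at distance `d` from the origin, of the density `exp (-a‖x‖)` on
three-dimensional space. For `d = 0` the value is the junk `0`. -/
noncomputable def exponentialPotential (a d : ℝ) : ℝ :=
  4 * π / (a ^ 3 * d) * (2 - (2 + a * d) * exp (-(a * d)))

theorem exponentialPotential_nonneg {a d : ℝ} (ha : 0 ≤ a) (hd : 0 ≤ d) :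
    0 ≤ exponentialPotential a d := by
  have had : 0 ≤ a * d := mul_nonneg ha hd
  have hexp : (2 + a * d) * exp (-(a * d)) ≤ 2 := by
    rw [exp_neg, ← div_eq_mul_inv, div_le_iff₀ (exp_pos _)]
    linarith [add_one_le_exp (a * d)]
  exact mul_nonneg (by positivity) (sub_nonneg.2 hexp)

theorem lintegral_Ioi_shell_exp {a d : ℝ} (ha : 0 < a) (hd : 0 < d) :
    ∫⁻ r in Ioi 0, ENNReal.ofReal (4 * π * r ^ 2 / max r d) * ENNReal.ofReal (exp (-(a * r))) =
      ENNReal.ofReal (exponentialPotential a d) := by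
  let k : ℝ → ℝ := fun r => 4 * π * r ^ 2 / max r d * exp (-(a * r))
  have hnear : EqOn (fun r => 4 * π / d * (r ^ 2 * exp (-(a * r)))) k (Ioc 0 d) := fun r hr => by
    simp only [k, max_eq_right hr.2]
    ring
  have hfar : EqOn (fun r => 4 * π * (r ^ 1 * exp (-(a * r)))) k (Ioi d) := fun r hr => by
    have hr0 : r ≠ 0 := (hd.trans hr).ne'
    simp only [k, max_eq_left hr.out.le]
    field_simp
  have hnearInt : IntegrableOn k (Ioc 0 d) :=
    IntegrableOn.congr_fun (((integrableOn_Ioi_pow_mul_exp_neg_mul 2 ha le_rfl).mono_set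
      Ioc_subset_Ioi_self).const_mul _) hnear measurableSet_Ioc
  have hfarInt : IntegrableOn k (Ioi d) :=
    IntegrableOn.congr_fun ((integrableOn_Ioi_pow_mul_exp_neg_mul 1 ha hd.le).const_mul _) hfar
      measurableSet_Ioi
  have hint : IntegrableOn k (Ioi 0) := by
    simpa only [Ioc_union_Ioi_eq_Ioi hd.le] using hnearInt.union hfarInt
  have hval : ∫ r in Ioi 0, k r = exponentialPotential a d := by
    rw [← Ioc_union_Ioi_eq_Ioi hd.le,
      setIntegral_union Ioc_disjoint_Ioi_same measurableSet_Ioi hnearInt hfarInt,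
      ← setIntegral_congr_fun measurableSet_Ioc hnear,
      ← setIntegral_congr_fun measurableSet_Ioi hfar,
      integral_const_mul, integral_const_mul, integral_Ioc_pow_mul_exp_neg_mul 2 ha hd.le,
      integral_Ioi_pow_mul_exp_neg_mul 1 ha hd.le]
    simp only [upperIncompleteGamma, exponentialPotential, Nat.factorial]
    field_simp
    push_cast
    ring
  have hnonneg : ∀ r ∈ Ioi 0, 0 ≤ k r := fun r hr => by
    have : 0 < r := hr
    positivity
  rw [← hval, ofReal_integral_eq_lintegral_ofReal hint
    (ae_restrict_of_forall_mem measurableSet_Ioi hnonneg)]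
  refine setLIntegral_congr_fun measurableSet_Ioi fun r hr => ?_
  have hr : 0 < r := hr
  exact (ENNReal.ofReal_mul (by positivity)).symm

theorem lintegral_Ioi_pow_four_mul_exponentialPotential {a b : ℝ} (ha : 0 < a) (hb : 0 < b) :
    ∫⁻ r in Ioi 0, ENNReal.ofReal (r ^ 4 * exp (-(b * r)) * exponentialPotential a r) =
      ENNReal.ofReal (48 * π / a ^ 3 * (1 / b ^ 4 - 1 / (a + b) ^ 4 - 2 * a / (a + b) ^ 5)) := by
  have hab : 0 < a + b := add_pos ha hb
  have hexpand : EqOn (fun r => r ^ 4 * exp (-(b * r)) * exponentialPotential a r)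
      (fun r => 4 * π / a ^ 3 * (2 * (r ^ 3 * exp (-(b * r))) - 2 * (r ^ 3 * exp (-((a + b) * r))) -
        a * (r ^ 4 * exp (-((a + b) * r))))) (Ioi 0) := fun r hr => by
    have hr : r ≠ 0 := hr.out.ne'
    simp only [exponentialPotential, add_mul a b r, neg_add, exp_add]
    field_simp
    ring
  have hb3 := (integrableOn_Ioi_pow_mul_exp_neg_mul 3 hb le_rfl).const_mul 2
  have hab3 := (integrableOn_Ioi_pow_mul_exp_neg_mul 3 hab le_rfl).const_mul 2
  have hdiff3 : IntegrableOn
      (fun r => 2 * (r ^ 3 * exp (-(b * r))) - 2 * (r ^ 3 * exp (-((a + b) * r)))) (Ioi 0) :=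
    hb3.sub hab3
  have hab4 := (integrableOn_Ioi_pow_mul_exp_neg_mul 4 hab le_rfl).const_mul a
  have hint : IntegrableOn (fun r => r ^ 4 * exp (-(b * r)) * exponentialPotential a r) (Ioi 0) :=
    IntegrableOn.congr_fun ((hdiff3.sub hab4).const_mul (4 * π / a ^ 3)) hexpand.symm
      measurableSet_Ioi
  have hnonneg : ∀ r ∈ Ioi 0, 0 ≤ r ^ 4 * exp (-(b * r)) * exponentialPotential a r :=
    fun r hr => mul_nonneg (by positivity) (exponentialPotential_nonneg ha.le hr.out.le)
  rw [← ofReal_integral_eq_lintegral_ofReal hint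
      (ae_restrict_of_forall_mem measurableSet_Ioi hnonneg),
    setIntegral_congr_fun measurableSet_Ioi hexpand, integral_const_mul,
    integral_sub hdiff3 hab4, integral_sub hb3 hab3]
  simp only [integral_const_mul, integral_Ioi_zero_pow_mul_exp_neg_mul _ hb,
    integral_Ioi_zero_pow_mul_exp_neg_mul _ hab, Nat.factorial]
  congr 1
  push_cast
  ring

theorem rpow_natCast_div_two_sq {z : ℝ} (hz : 0 ≤ z) (n : ℕ) :
    (z ^ ((n : ℝ) / 2)) ^ 2 = z ^ n := by
  rw [rpow_div_two_eq_sqrt _ hz, rpow_natCast, pow_right_comm, sq_sqrt hz]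

theorem lintegral_fun_norm_addHaar {E : Type*} [NormedAddCommGroup E] [NormedSpace ℝ E]
    [FiniteDimensional ℝ E] [Nontrivial E] [MeasurableSpace E] [BorelSpace E] (μ : Measure E)
    [μ.IsAddHaarMeasure] {f : ℝ → ℝ≥0∞} (hf : Measurable f) :
    ∫⁻ x, f ‖x‖ ∂μ = finrank ℝ E * μ (Metric.ball 0 1) *
      ∫⁻ r in Ioi 0, ENNReal.ofReal (r ^ (finrank ℝ E - 1)) * f r :=
  calc
    ∫⁻ x, f ‖x‖ ∂μ = ∫⁻ x : ({0}ᶜ : Set E), f ‖x.1‖ ∂μ.comap (↑) := by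
      rw [lintegral_subtype_comap (measurableSet_singleton _).compl fun x => f ‖x‖,
        restrict_compl_singleton]
    _ = ∫⁻ p, f p.2 ∂μ.toSphere.prod (.volumeIoiPow (finrank ℝ E - 1)) := by
      simpa using μ.measurePreserving_homeomorphUnitSphereProd.lintegral_comp_emb
        (Homeomorph.measurableEmbedding _) (f ∘ Subtype.val ∘ Prod.snd)
    _ = μ.toSphere univ * ∫⁻ r : Ioi (0 : ℝ), f r ∂.volumeIoiPow (finrank ℝ E - 1) := by
      have hmeas : Measurable fun p : Metric.sphere (0 : E) 1 × Ioi (0 : ℝ) => f p.2 := by fun_prop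
      simp [lintegral_prod _ hmeas.aemeasurable, mul_comm]
    _ = _ := by
      rw [μ.toSphere_apply_univ, Measure.volumeIoiPow,
        lintegral_withDensity_eq_lintegral_mul _ (by fun_prop) (by fun_prop)]
      exact congrArg _ (lintegral_subtype_comap measurableSet_Ioi fun r =>
        ENNReal.ofReal (r ^ (finrank ℝ E - 1)) * f r)

section InnerProductSpace

variable {E : Type*} [NormedAddCommGroup E] [InnerProductSpace ℝ E] [FiniteDimensional ℝ E]
  [MeasurableSpace E] [BorelSpace E] {e : E}

theorem measurePreserving_smul_add_orthogonal (he : ‖e‖ = 1) :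
    MeasurePreserving fun p : ℝ × (ℝ ∙ e)ᗮ => p.1 • e + (p.2 : E) :=
  (ℝ ∙ e).orthogonalDecomposition.symm.measurePreserving.comp <|
    (WithLp.volume_preserving_toLp _ _).comp <|
      (LinearIsometryEquiv.toSpanUnitSingleton e he).measurePreserving.prod (.id volume)

theorem lintegral_inner_norm (he : ‖e‖ = 1) {F : ℝ → ℝ → ℝ≥0∞}
    (hF : Measurable (Function.uncurry F)) :
    ∫⁻ x, F ⟪e, x⟫_ℝ ‖x‖ = ∫⁻ z, ∫⁻ w : (ℝ ∙ e)ᗮ, F z √(z ^ 2 + ‖w‖ ^ 2) := by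
  have hm : Measurable fun x : E => F ⟪e, x⟫_ℝ ‖x‖ := by fun_prop
  have hinner (w : (ℝ ∙ e)ᗮ) : ⟪e, w⟫_ℝ = 0 :=
    Submodule.mem_orthogonal_singleton_iff_inner_right.1 w.2
  rw [← (measurePreserving_smul_add_orthogonal he).lintegral_comp hm, Measure.volume_eq_prod,
    lintegral_prod _ (by fun_prop)]
  refine lintegral_congr fun z => lintegral_congr fun w => ?_
  have hnorm : ‖z • e + (w : E)‖ ^ 2 = z ^ 2 + ‖w‖ ^ 2 := by
    rw [norm_add_sq_real, inner_smul_left, hinner, norm_smul, he]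
    simp
  rw [← hnorm, sqrt_sq (norm_nonneg _), inner_add_right, inner_smul_right, hinner,
    real_inner_self_eq_norm_sq, he]
  simp

variable (hE : finrank ℝ E = 3) (he : ‖e‖ = 1)

include hE he in
theorem lintegral_inner_norm_hatBox {F : ℝ → ℝ → ℝ≥0∞} (hF : Measurable (Function.uncurry F)) :
    ∫⁻ x, F ⟪e, x⟫_ℝ ‖x‖ =
      ∫⁻ r in Ioi 0, ENNReal.ofReal (2 * π * r) * ∫⁻ z in Ioo (-r) r, F z r := by
  have : Fact (finrank ℝ E = 2 + 1) := ⟨hE⟩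
  have hrank : finrank ℝ (ℝ ∙ e)ᗮ = 2 :=
    Submodule.finrank_orthogonal_span_singleton (norm_ne_zero_iff.1 (he ▸ one_ne_zero))
  have : Nontrivial (ℝ ∙ e)ᗮ := Module.nontrivial_of_finrank_pos (R := ℝ) (hrank ▸ two_pos)
  have hball : volume (Metric.ball (0 : (ℝ ∙ e)ᗮ) 1) = ENNReal.ofReal π := by
    simp [InnerProductSpace.volume_ball_of_dim_even (k := 1) hrank]
  have hplane (z : ℝ) : ∫⁻ w : (ℝ ∙ e)ᗮ, F z √(z ^ 2 + ‖w‖ ^ 2) =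
      ∫⁻ r in Ioi |z|, ENNReal.ofReal (2 * π * r) * F z r := by
    rw [lintegral_fun_norm_addHaar volume (f := fun ρ => F z √(z ^ 2 + ρ ^ 2)) (by fun_prop),
      hrank, hball]
    simp only [Nat.cast_ofNat, Nat.add_one_sub_one, pow_one]
    rw [lintegral_Ioi_comp_sqrt_sq_add_sq, ← lintegral_const_mul _ (by fun_prop)]
    refine lintegral_congr fun r => ?_
    rw [ENNReal.ofReal_mul (by positivity), ENNReal.ofReal_mul two_pos.le, ENNReal.ofReal_ofNat]
    ring
  simp_rw [lintegral_inner_norm he hF, hplane]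
  rw [lintegral_lintegral_Ioi_abs_swap (by fun_prop)]
  refine lintegral_congr fun r => ?_
  rw [lintegral_const_mul _ (by fun_prop)]

include hE he in
theorem lintegral_inner_sq_mul_norm {g : ℝ → ℝ≥0∞} (hg : Measurable g) :
    ∫⁻ x, ENNReal.ofReal (⟪e, x⟫_ℝ ^ 2) * g ‖x‖ =
      ∫⁻ r in Ioi 0, ENNReal.ofReal (4 * π / 3 * r ^ 4) * g r := by
  rw [lintegral_inner_norm_hatBox hE he (F := fun z r => ENNReal.ofReal (z ^ 2) * g r)
    (by fun_prop)]
  refine setLIntegral_congr_fun measurableSet_Ioi fun r hr => ?_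
  have hr : 0 < r := hr
  rw [lintegral_mul_const _ (by fun_prop), lintegral_Ioo_sq hr.le, ← mul_assoc,
    ← ENNReal.ofReal_mul (by positivity)]
  ring_nf

include hE in
theorem lintegral_norm_mul_inv_norm_sub {g : ℝ → ℝ≥0∞} (hg : Measurable g) {y : E} (hy : y ≠ 0) :
    ∫⁻ x, g ‖x‖ * ENNReal.ofReal ‖x - y‖⁻¹ =
      ∫⁻ r in Ioi 0, ENNReal.ofReal (4 * π * r ^ 2 / max r ‖y‖) * g r := by
  have hd : 0 < ‖y‖ := norm_pos_iff.2 hy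
  let e := ‖y‖⁻¹ • y
  have he : ‖e‖ = 1 := norm_smul_inv_norm hy
  have hdist (x : E) : ‖x - y‖ = √(‖x‖ ^ 2 + ‖y‖ ^ 2 - 2 * ‖y‖ * ⟪e, x⟫_ℝ) := by
    rw [← sqrt_sq (norm_nonneg (x - y)), norm_sub_sq_real, real_inner_smul_left,
      real_inner_comm]
    congr 1
    field_simp
    ring
  simp_rw [hdist]
  rw [lintegral_inner_norm_hatBox hE he (F := fun z r =>
    g r * ENNReal.ofReal (√(r ^ 2 + ‖y‖ ^ 2 - 2 * ‖y‖ * z))⁻¹) (by fun_prop)]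
  refine setLIntegral_congr_fun measurableSet_Ioi fun r hr => ?_
  have hr : 0 < r := hr
  rw [lintegral_const_mul _ (by fun_prop), lintegral_Ioo_inv_sqrt hr hd, mul_left_comm, mul_comm,
    ← ENNReal.ofReal_mul (by positivity)]
  ring_nf

include hE in
theorem lintegral_exp_mul_inv_norm_sub {a : ℝ} (ha : 0 < a) {y : E} (hy : y ≠ 0) :
    ∫⁻ x, ENNReal.ofReal (exp (-(a * ‖x‖)) * ‖x - y‖⁻¹) =
      ENNReal.ofReal (exponentialPotential a ‖y‖) := by
  rw [← lintegral_Ioi_shell_exp ha (norm_pos_iff.2 hy),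
    ← lintegral_norm_mul_inv_norm_sub hE (g := fun r => ENNReal.ofReal (exp (-(a * r))))
      (by fun_prop) hy]
  exact lintegral_congr fun x => ENNReal.ofReal_mul (exp_pos _).le

include hE he in
theorem lintegral_lintegral_exp_inner_sq_exp_div_norm_sub {a b : ℝ} (ha : 0 < a) (hb : 0 < b) :
    ∫⁻ y : E, ∫⁻ x : E,
        ENNReal.ofReal (exp (-(a * ‖x‖)) * (⟪e, y⟫_ℝ ^ 2 * exp (-(b * ‖y‖))) / ‖x - y‖) =
      ENNReal.ofReal (64 * π ^ 2 / a ^ 3 * (1 / b ^ 4 - 1 / (a + b) ^ 4 -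
        2 * a / (a + b) ^ 5)) := by
  have : Nontrivial E := Module.nontrivial_of_finrank_pos (R := ℝ) (hE ▸ three_pos)
  have hpot (y : E) (hy : y ≠ 0) : ∫⁻ x : E,
      ENNReal.ofReal (exp (-(a * ‖x‖)) * (⟪e, y⟫_ℝ ^ 2 * exp (-(b * ‖y‖))) / ‖x - y‖) =
      ENNReal.ofReal (⟪e, y⟫_ℝ ^ 2) *
        ENNReal.ofReal (exp (-(b * ‖y‖)) * exponentialPotential a ‖y‖) := by
    rw [ENNReal.ofReal_mul (exp_pos _).le, ← lintegral_exp_mul_inv_norm_sub hE ha hy, ← mul_assoc,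
      ← ENNReal.ofReal_mul (sq_nonneg _), ← lintegral_const_mul _ (by fun_prop)]
    refine lintegral_congr fun x => ?_
    rw [← ENNReal.ofReal_mul (by positivity)]
    ring_nf
  have hmeas : Measurable (exponentialPotential a) := by unfold exponentialPotential; fun_prop
  rw [lintegral_congr_ae ((Measure.ae_ne volume 0).mono hpot),
    lintegral_inner_sq_mul_norm hE he
      (g := fun r => ENNReal.ofReal (exp (-(b * r)) * exponentialPotential a r)) (by fun_prop)]
  have hsplit (r : ℝ) : ENNReal.ofReal (4 * π / 3 * r ^ 4) *
      ENNReal.ofReal (exp (-(b * r)) * exponentialPotential a r) = ENNReal.ofReal (4 * π / 3) *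
        ENNReal.ofReal (r ^ 4 * exp (-(b * r)) * exponentialPotential a r) := by
    rw [← ENNReal.ofReal_mul (by positivity), ← ENNReal.ofReal_mul (by positivity)]
    ring_nf
  simp_rw [hsplit]
  rw [lintegral_const_mul' _ _ ENNReal.ofReal_ne_top,
    lintegral_Ioi_pow_four_mul_exponentialPotential ha hb, ← ENNReal.ofReal_mul (by positivity)]
  ring_nf

include hE he in
theorem integral_integral_exp_inner_sq_exp_div_norm_sub {a b : ℝ} (ha : 0 < a) (hb : 0 < b) :
    ∫ x : E, ∫ y : E, exp (-(a * ‖x‖)) * (⟪e, y⟫_ℝ ^ 2 * exp (-(b * ‖y‖))) / ‖x - y‖ =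
      64 * π ^ 2 * (a ^ 4 + 5 * a ^ 3 * b + 10 * a ^ 2 * b ^ 2 + 10 * a * b ^ 3 + 2 * b ^ 4) /
        (a ^ 2 * b ^ 4 * (a + b) ^ 5) := by
  have hmeas : Measurable (Function.uncurry fun x y : E =>
      exp (-(a * ‖x‖)) * (⟪e, y⟫_ℝ ^ 2 * exp (-(b * ‖y‖))) / ‖x - y‖) := by
    fun_prop
  refine integral_integral_eq_of_lintegral_lintegral hmeas.aestronglyMeasurable
    (fun x y => by positivity) (by positivity) ?_
  rw [lintegral_lintegral_exp_inner_sq_exp_div_norm_sub hE he ha hb]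
  congr 1
  field_simp
  ring

include hE he in
theorem coulomb_1s_2p_general {Z₁ Z₃ : ℝ} (hZ₁ : 0 < Z₁) (hZ₃ : 0 < Z₃) {φ1 φ3 : E → ℝ}
    (hφ1 : ∀ x, φ1 x = Z₁ ^ ((3 : ℝ) / 2) / √π * exp (-Z₁ * ‖x‖))
    (hφ3 : ∀ x, φ3 x = Z₃ ^ ((5 : ℝ) / 2) / √(32 * π) * ⟪e, x⟫_ℝ * exp (-Z₃ * ‖x‖ / 2)) :
    ∫ x : E, ∫ y : E, (φ1 x) ^ 2 * (φ3 y) ^ 2 / ‖x - y‖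
      = Z₁ * Z₃ * (8 * Z₁ ^ 4 + 20 * Z₁ ^ 3 * Z₃ + 20 * Z₁ ^ 2 * Z₃ ^ 2
          + 10 * Z₁ * Z₃ ^ 3 + Z₃ ^ 4) / (2 * Z₁ + Z₃) ^ 5 := by
  have hsq1 (x : E) : φ1 x ^ 2 = Z₁ ^ 3 / π * exp (-(2 * Z₁ * ‖x‖)) := by
    rw [hφ1, mul_pow, div_pow, sq_sqrt pi_pos.le, ← exp_nat_mul,
      ← rpow_natCast_div_two_sq hZ₁.le 3]
    ring_nf
  have hsq3 (y : E) : φ3 y ^ 2 =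
      Z₃ ^ 5 / (32 * π) * (⟪e, y⟫_ℝ ^ 2 * exp (-(Z₃ * ‖y‖))) := by
    rw [hφ3, mul_pow, mul_pow, div_pow, sq_sqrt (by positivity), ← exp_nat_mul,
      ← rpow_natCast_div_two_sq hZ₃.le 5]
    ring_nf
  have hdensity (x y : E) : φ1 x ^ 2 * φ3 y ^ 2 / ‖x - y‖ = Z₁ ^ 3 * Z₃ ^ 5 / (32 * π ^ 2) *
      (exp (-(2 * Z₁ * ‖x‖)) * (⟪e, y⟫_ℝ ^ 2 * exp (-(Z₃ * ‖y‖))) / ‖x - y‖) := by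
    rw [hsq1, hsq3]
    ring
  simp_rw [hdensity, integral_const_mul,
    integral_integral_exp_inner_sq_exp_div_norm_sub hE he (mul_pos two_pos hZ₁) hZ₃]
  field_simp
  ring

end InnerProductSpace

/-- The Coulomb integral `(11|33)` between the 1s and 2p₃ Slater clouds. -/
theorem coulomb_1s_2p (Z₁ Z₃ : ℝ) (hZ₁ : 0 < Z₁) (hZ₃ : 0 < Z₃)
    (φ1 φ3 : EuclideanSpace ℝ (Fin 3) → ℝ)
    (hφ1 : ∀ x, φ1 x = Z₁ ^ ((3:ℝ)/2) / Real.sqrt Real.pi * Real.exp (-Z₁ * ‖x‖))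
    (hφ3 : ∀ x, φ3 x = Z₃ ^ ((5:ℝ)/2) / Real.sqrt (32 * Real.pi) * x 2 *
      Real.exp (-Z₃ * ‖x‖ / 2)) :
    ∫ x : EuclideanSpace ℝ (Fin 3), ∫ y : EuclideanSpace ℝ (Fin 3),
        (φ1 x) ^ 2 * (φ3 y) ^ 2 / ‖x - y‖
      = Z₁ * Z₃ * (8 * Z₁ ^ 4 + 20 * Z₁ ^ 3 * Z₃ + 20 * Z₁ ^ 2 * Z₃ ^ 2
          + 10 * Z₁ * Z₃ ^ 3 + Z₃ ^ 4) / (2 * Z₁ + Z₃) ^ 5 :=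
  coulomb_1s_2p_general (e := EuclideanSpace.single 2 1) finrank_euclideanSpace_fin (by simp)
    hZ₁ hZ₃ hφ1 (by simpa [EuclideanSpace.inner_single_left] using hφ3)
end

section
/- The exchange integral between the 1s and 2p₃ Slater orbitals equals (13|31) = 112 Z₁³ Z₃⁵ / (3(2Z₁+Z₃)⁷). -/
open MeasureTheory Real

/-!
In spherical coordinates with polar axis `x`, the pair `(‖y‖, cos ∠(x, y))` is distributed under
Lebesgue measure on a three-dimensional space as the product of `ρ² dρ` and `2π dt` on `[-1, 1]`
(Archimedes). Since `‖x - y‖` is a function of `‖x‖`, `‖y‖` and this cosine, the Coulomb potential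
at `x` of a density `⟪v, y⟫ f ‖y‖` involves only the first Legendre coefficient
`2/3 · min(r, ρ) / max(r, ρ)²` of the kernel: the component of `v` orthogonal to `x` contributes
nothing, by reflection. Integrating against a second such density reduces the energy to a symmetric
radial double integral.

The product of the two orbitals is a density of this kind, `⟪v, x⟫ exp (-κ ‖x‖)` with
`κ = Z₁ + Z₃ / 2`, and the radial integral is twice its part over `ρ > r`, where the kernel is a
monomial.
-/

open Filter Function Module Set InnerProductGeometry
open scoped ENNReal RealInnerProductSpace Topology

section PolarCoordinates

theorem sqrt_mul_cos_sq_add_mul_sin_sq {s : ℝ} (hs : 0 ≤ s) (θ : ℝ) :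
    √((s * cos θ) ^ 2 + (s * sin θ) ^ 2) = s := by
  rw [mul_pow, mul_pow, ← mul_add, cos_sq_add_sin_sq, mul_one, sqrt_sq hs]

theorem lintegral_comp_sqrt_sq_add_sq {h : ℝ → ℝ≥0∞} (hh : Measurable h) :
    ∫⁻ p : ℝ × ℝ, h √(p.1 ^ 2 + p.2 ^ 2) =
      ENNReal.ofReal (2 * π) * ∫⁻ s in Ioi (0 : ℝ), ENNReal.ofReal s * h s := by
  have hpolar : EqOn
      (fun p => ENNReal.ofReal p.1 • h √((polarCoord.symm p).1 ^ 2 + (polarCoord.symm p).2 ^ 2))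
      (fun p => ENNReal.ofReal p.1 * h p.1) (Ioi (0 : ℝ) ×ˢ Ioo (-π) π) := by
    rintro ⟨s, θ⟩ ⟨hs, -⟩
    simp [polarCoord_symm_apply, sqrt_mul_cos_sq_add_mul_sin_sq (mem_Ioi.1 hs).le]
  rw [← lintegral_comp_polarCoord_symm, polarCoord_target,
    setLIntegral_congr_fun (measurableSet_Ioi.prod measurableSet_Ioo) hpolar,
    Measure.volume_eq_prod, ← Measure.prod_restrict, lintegral_prod _ (by fun_prop)]
  simp only [lintegral_const, Measure.restrict_apply_univ, Real.volume_Ioo]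
  rw [lintegral_mul_const _ (by fun_prop), mul_comm]
  ring_nf

theorem lintegral_lintegral_Ioi_eq_polar {G : ℝ × ℝ → ℝ≥0∞} (hG : Measurable G) :
    ∫⁻ z, ∫⁻ s in Ioi (0 : ℝ), G (z, s) =
      ∫⁻ ρ in Ioi (0 : ℝ), ∫⁻ θ in Ioo 0 π,
        ENNReal.ofReal ρ * G (ρ * cos θ, ρ * sin θ) := by
  set U : Set (ℝ × ℝ) := univ ×ˢ Ioi 0
  have hU : MeasurableSet U := MeasurableSet.univ.prod measurableSet_Ioi
  have hpolar : EqOn (fun p => ENNReal.ofReal p.1 • U.indicator G (polarCoord.symm p))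
      ((univ ×ˢ Ioi 0).indicator fun p => ENNReal.ofReal p.1 * G (p.1 * cos p.2, p.1 * sin p.2))
      (Ioi 0 ×ˢ Ioo (-π) π) := by
    rintro ⟨ρ, θ⟩ ⟨hρ, hθ⟩
    have hsin : 0 < ρ * sin θ ↔ 0 < θ := by
      rw [mul_pos_iff_of_pos_left (mem_Ioi.1 hρ)]
      refine ⟨fun h => ?_, fun h => sin_pos_of_pos_of_lt_pi h hθ.2⟩
      contrapose! h
      exact sin_nonpos_of_nonpos_of_neg_pi_le h hθ.1.le
    by_cases h : 0 < θ <;> simp [U, polarCoord_symm_apply, indicator, hsin, h]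
  have hset : (Ioi (0 : ℝ) ×ˢ Ioo (-π) π) ∩ (univ ×ˢ Ioi 0) = Ioi (0 : ℝ) ×ˢ Ioo 0 π := by
    ext ⟨ρ, θ⟩
    simp only [mem_inter_iff, mem_prod, mem_Ioi, mem_Ioo, mem_univ, true_and]
    constructor
    · tauto
    · exact fun h => ⟨⟨h.1, by linarith [pi_pos, h.2.1], h.2.2⟩, h.2.1⟩
  calc ∫⁻ z, ∫⁻ s in Ioi (0 : ℝ), G (z, s)
      = ∫⁻ p, U.indicator G p := by
        rw [lintegral_indicator hU, Measure.volume_eq_prod, ← Measure.prod_restrict,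
          lintegral_prod _ hG.aemeasurable, Measure.restrict_univ]
    _ = ∫⁻ p in Ioi (0 : ℝ) ×ˢ Ioo 0 π,
          ENNReal.ofReal p.1 * G (p.1 * cos p.2, p.1 * sin p.2) := by
        rw [← lintegral_comp_polarCoord_symm, polarCoord_target,
          setLIntegral_congr_fun (measurableSet_Ioi.prod measurableSet_Ioo) hpolar,
          setLIntegral_indicator (MeasurableSet.univ.prod measurableSet_Ioi), inter_comm, hset]
    _ = _ := by
        rw [Measure.volume_eq_prod, ← Measure.prod_restrict, lintegral_prod _ (by fun_prop)]

theorem lintegral_sin_mul_comp_cos (h : ℝ → ℝ≥0∞) :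
    ∫⁻ θ in Ioo 0 π, ENNReal.ofReal (sin θ) * h (cos θ) = ∫⁻ t in Icc (-1) 1, h t := by
  rw [← bijOn_cos.image_eq, lintegral_image_eq_lintegral_abs_deriv_mul measurableSet_Icc
    (fun θ _ => (hasDerivAt_cos θ).hasDerivWithinAt) injOn_cos, setLIntegral_congr Ioo_ae_eq_Icc]
  refine setLIntegral_congr_fun measurableSet_Icc fun θ hθ => ?_
  rw [abs_neg, abs_of_nonneg (sin_nonneg_of_mem_Icc hθ)]

theorem lintegral_lintegral_Ioi_eq_radius_cos {F : ℝ × ℝ → ℝ≥0∞} (hF : Measurable F) :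
    ∫⁻ z, ∫⁻ s in Ioi (0 : ℝ),
        ENNReal.ofReal s * F (√(z ^ 2 + s ^ 2), z / √(z ^ 2 + s ^ 2)) =
      ∫⁻ ρ in Ioi (0 : ℝ), ENNReal.ofReal (ρ ^ 2) * ∫⁻ t in Icc (-1) 1, F (ρ, t) := by
  rw [lintegral_lintegral_Ioi_eq_polar
    (G := fun q => ENNReal.ofReal q.2 * F (√(q.1 ^ 2 + q.2 ^ 2), q.1 / √(q.1 ^ 2 + q.2 ^ 2)))
    (by fun_prop)]
  refine setLIntegral_congr_fun measurableSet_Ioi fun ρ hρ => ?_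
  have hρ' : 0 < ρ := hρ
  rw [← lintegral_sin_mul_comp_cos fun t => F (ρ, t), ← lintegral_const_mul _ (by fun_prop)]
  refine setLIntegral_congr_fun measurableSet_Ioo fun θ _ => ?_
  simp only [sqrt_mul_cos_sq_add_mul_sin_sq hρ'.le, mul_div_cancel_left₀ _ hρ'.ne']
  rw [ENNReal.ofReal_mul hρ'.le, ENNReal.ofReal_pow hρ'.le]
  ring

end PolarCoordinates

/-- The radial part `ρ² dρ` of Lebesgue measure in spherical coordinates of a three-dimensional
Euclidean space. -/
noncomputable def radialMeasure : Measure ℝ :=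
  (volume.restrict (Ioi 0)).withDensity fun ρ => ENNReal.ofReal (ρ ^ 2)

/-- The part of Lebesgue measure carried by the cosine `t` of the colatitude in spherical
coordinates, with the longitude integrated out: `2π dt` on `[-1, 1]`. -/
noncomputable def colatitudeMeasure : Measure ℝ :=
  ENNReal.ofReal (2 * π) • volume.restrict (Icc (-1) 1)

instance : SFinite radialMeasure := by unfold radialMeasure; infer_instance

instance : IsFiniteMeasure colatitudeMeasure :=
  ⟨by simp [colatitudeMeasure, ENNReal.mul_lt_top]⟩

theorem radialMeasure_absolutelyContinuous : radialMeasure ≪ volume.restrict (Ioi 0) :=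
  withDensity_absolutelyContinuous _ _

theorem integrable_radialMeasure_iff {f : ℝ → ℝ} :
    Integrable f radialMeasure ↔ IntegrableOn (fun ρ => ρ ^ 2 * f ρ) (Ioi 0) := by
  rw [radialMeasure, integrable_withDensity_iff_integrable_smul' (by fun_prop) (by simp)]
  simp [IntegrableOn, ENNReal.toReal_ofReal, sq_nonneg]

theorem integral_radialMeasure (f : ℝ → ℝ) :
    ∫ ρ, f ρ ∂radialMeasure = ∫ ρ in Ioi 0, ρ ^ 2 * f ρ := by
  rw [radialMeasure, integral_withDensity_eq_integral_toReal_smul (by fun_prop) (by simp)]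
  simp [ENNReal.toReal_ofReal, sq_nonneg]

theorem integral_colatitudeMeasure (f : ℝ → ℝ) :
    ∫ t, f t ∂colatitudeMeasure = 2 * π * ∫ t in (-1)..1, f t := by
  rw [colatitudeMeasure, integral_smul_measure, ENNReal.toReal_ofReal two_pi_pos.le, smul_eq_mul,
    integral_Icc_eq_integral_Ioc, intervalIntegral.integral_of_le (by norm_num)]

theorem lintegral_radialMeasure_prod_colatitudeMeasure {F : ℝ × ℝ → ℝ≥0∞} (hF : Measurable F) :
    ∫⁻ p, F p ∂radialMeasure.prod colatitudeMeasure = ENNReal.ofReal (2 * π) *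
      ∫⁻ ρ in Ioi 0, ENNReal.ofReal (ρ ^ 2) * ∫⁻ t in Icc (-1) 1, F (ρ, t) := by
  simp only [lintegral_prod _ hF.aemeasurable, colatitudeMeasure, lintegral_smul_measure,
    smul_eq_mul]
  rw [lintegral_const_mul _ (by fun_prop), radialMeasure,
    lintegral_withDensity_eq_lintegral_mul _ (by fun_prop) (by fun_prop)]
  rfl

section ThreeDimensional

variable {E : Type*} [NormedAddCommGroup E] [InnerProductSpace ℝ E]

theorem exists_orthonormalBasis_apply_zero_eq {n : ℕ} [NeZero n] (hE : finrank ℝ E = n) {e : E}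
    (he : ‖e‖ = 1) : ∃ b : OrthonormalBasis (Fin n) ℝ E, b 0 = e := by
  have : FiniteDimensional ℝ E := .of_finrank_pos (hE ▸ Nat.pos_of_neZero n)
  have horth : Orthonormal ℝ (({0} : Set (Fin n)).domRestrict fun _ => e) := by
    simp [he, Set.domRestrict]
  obtain ⟨b, hb⟩ := horth.exists_orthonormalBasis_extension_of_card_eq (by simp [hE])
  exact ⟨b, hb 0 rfl⟩

variable [MeasurableSpace E] [BorelSpace E]

theorem measurable_cos_angle (x : E) : Measurable fun y => cos (angle x y) := by
  simp only [cos_angle]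
  fun_prop

variable [FiniteDimensional ℝ E]

theorem measurePreserving_inner_orthonormalBasis (b : OrthonormalBasis (Fin 3) ℝ E) :
    MeasurePreserving fun y => (⟪b 0, y⟫, ⟪b 1, y⟫, ⟪b 2, y⟫) := by
  have h := (((MeasurePreserving.id volume).prod (volume_preserving_finTwoArrow ℝ)).comp
    (volume_preserving_piFinSuccAbove (fun _ : Fin 3 => ℝ) 0)).comp
    ((PiLp.volume_preserving_ofLp (Fin 3)).comp b.measurePreserving_repr)
  simp only [← b.repr_apply_apply]
  exact h

theorem measurePreserving_norm_cos_angle (hE : finrank ℝ E = 3) {x : E} (hx : x ≠ 0) :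
    MeasurePreserving (fun y => (‖y‖, cos (angle x y))) volume
      (radialMeasure.prod colatitudeMeasure) := by
  have hmeas : Measurable fun y => (‖y‖, cos (angle x y)) :=
    measurable_norm.prodMk (measurable_cos_angle x)
  refine ⟨hmeas, Measure.ext_of_lintegral _ fun F hF => ?_⟩
  obtain ⟨b, hb⟩ := exists_orthonormalBasis_apply_zero_eq hE (norm_smul_inv_norm (𝕜 := ℝ) hx)
  set H : ℝ → ℝ → ℝ≥0∞ := fun z s => F (√(z ^ 2 + s ^ 2), z / √(z ^ 2 + s ^ 2)) with hHdef
  have hH : Measurable ↿H := by fun_prop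
  have hcyl (y : E) : F (‖y‖, cos (angle x y)) = H ⟪b 0, y⟫ √(⟪b 1, y⟫ ^ 2 + ⟪b 2, y⟫ ^ 2) := by
    have hnorm : ‖y‖ = √(⟪b 0, y⟫ ^ 2 + (⟪b 1, y⟫ ^ 2 + ⟪b 2, y⟫ ^ 2)) := by
      rw [← sqrt_sq (norm_nonneg y), ← b.sum_sq_inner_right y, Fin.sum_univ_three, add_assoc]
    have hcos : cos (angle x y) = ⟪b 0, y⟫ / ‖y‖ := by
      rw [cos_angle, hb, real_inner_smul_left, RCLike.ofReal_real_eq_id, id, ← div_eq_inv_mul,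
        div_div]
    rw [hcos, hnorm, hHdef]
    simp only [sq_sqrt (add_nonneg (sq_nonneg ⟪b 1, y⟫) (sq_nonneg ⟪b 2, y⟫))]
  calc ∫⁻ p, F p ∂volume.map (fun y => (‖y‖, cos (angle x y)))
      = ∫⁻ y, H ⟪b 0, y⟫ √(⟪b 1, y⟫ ^ 2 + ⟪b 2, y⟫ ^ 2) := by
        simp only [lintegral_map hF hmeas, hcyl]
    _ = ∫⁻ z, ∫⁻ p : ℝ × ℝ, H z √(p.1 ^ 2 + p.2 ^ 2) := by
        rw [(measurePreserving_inner_orthonormalBasis b).lintegral_comp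
          (f := fun q : ℝ × ℝ × ℝ => H q.1 √(q.2.1 ^ 2 + q.2.2 ^ 2)) (by fun_prop),
          Measure.volume_eq_prod, lintegral_prod _ (by fun_prop)]
    _ = ENNReal.ofReal (2 * π) * ∫⁻ z, ∫⁻ s in Ioi 0, ENNReal.ofReal s * H z s := by
        simp_rw [fun z => lintegral_comp_sqrt_sq_add_sq (h := H z) (by fun_prop)]
        rw [lintegral_const_mul _ (by fun_prop)]
    _ = ∫⁻ p, F p ∂radialMeasure.prod colatitudeMeasure := by
        rw [lintegral_lintegral_Ioi_eq_radius_cos hF,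
          lintegral_radialMeasure_prod_colatitudeMeasure hF]

end ThreeDimensional

section CoulombKernel

variable {a b : ℝ}

theorem sub_mul_pos_of_mem_Ioo (hb : 0 < b) (hab : b ≤ a) {t : ℝ} (ht : t ∈ Ioo (-1 : ℝ) 1) :
    0 < a - b * t := by
  nlinarith [ht.2]

theorem hasDerivAt_sqrt_sub_mul {t : ℝ} (h : 0 < a - b * t) :
    HasDerivAt (fun t => √(a - b * t)) (-b / (2 * √(a - b * t))) t := by
  simpa using (((hasDerivAt_id t).const_mul b).const_sub a).sqrt h.ne'

theorem hasDerivAt_neg_two_div_mul_sqrt_sub_mul (hb : 0 < b) {t : ℝ} (h : 0 < a - b * t) :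
    HasDerivAt (fun t => -2 / b * √(a - b * t)) (√(a - b * t))⁻¹ t := by
  refine ((hasDerivAt_sqrt_sub_mul h).const_mul _).congr_deriv ?_
  have := sqrt_pos.2 h
  field_simp

theorem intervalIntegrable_inv_sqrt_sub_mul (hb : 0 < b) (hab : b ≤ a) :
    IntervalIntegrable (fun t => (√(a - b * t))⁻¹) volume (-1) 1 :=
  (intervalIntegrable_iff_integrableOn_Ioc_of_le (by norm_num)).2 <|
    intervalIntegral.integrableOn_deriv_of_nonneg (by fun_prop)
      (fun _ ht => hasDerivAt_neg_two_div_mul_sqrt_sub_mul hb (sub_mul_pos_of_mem_Ioo hb hab ht))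
      fun _ _ => by positivity

theorem integral_inv_sqrt_sub_mul (hb : 0 < b) (hab : b ≤ a) :
    ∫ t in (-1)..1, (√(a - b * t))⁻¹ = 2 / b * (√(a + b) - √(a - b)) := by
  rw [intervalIntegral.integral_eq_sub_of_hasDerivAt_of_le (by norm_num) (by fun_prop)
    (fun _ ht => hasDerivAt_neg_two_div_mul_sqrt_sub_mul hb (sub_mul_pos_of_mem_Ioo hb hab ht))
    (intervalIntegrable_inv_sqrt_sub_mul hb hab)]
  ring_nf

theorem integral_mul_inv_sqrt_sub_mul (hb : 0 < b) (hab : b ≤ a) :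
    ∫ t in (-1)..1, t * (√(a - b * t))⁻¹ =
      2 / b ^ 2 * (a * (√(a + b) - √(a - b)) - (√(a + b) ^ 3 - √(a - b) ^ 3) / 3) := by
  have hderiv : ∀ t ∈ Ioo (-1 : ℝ) 1, HasDerivAt
      (fun t => 2 / b ^ 2 * (√(a - b * t) ^ 3 / 3 - a * √(a - b * t)))
      (t * (√(a - b * t))⁻¹) t := by
    intro t ht
    have h := sub_mul_pos_of_mem_Ioo hb hab ht
    have hsqrt := hasDerivAt_sqrt_sub_mul h
    refine ((((hsqrt.fun_pow 3).div_const 3).fun_sub (hsqrt.const_mul a)).const_mul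
      (2 / b ^ 2)).congr_deriv ?_
    have hpos := sqrt_pos.2 h
    have hsq := sq_sqrt h.le
    generalize √(a - b * t) = s at hpos hsq
    field_simp
    norm_num
    linear_combination (-3 : ℝ) * hsq
  rw [intervalIntegral.integral_eq_sub_of_hasDerivAt_of_le (by norm_num) (by fun_prop) hderiv
    ((intervalIntegrable_inv_sqrt_sub_mul hb hab).continuousOn_mul continuousOn_id)]
  ring_nf

variable {r ρ : ℝ}

theorem sqrt_sq_add_sq_add_two_mul (hr : 0 ≤ r) (hρ : 0 ≤ ρ) :
    √(r ^ 2 + ρ ^ 2 + 2 * r * ρ) = r + ρ := by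
  rw [← sqrt_sq (add_nonneg hr hρ)]
  ring_nf

theorem sqrt_sq_add_sq_sub_two_mul (r ρ : ℝ) :
    √(r ^ 2 + ρ ^ 2 - 2 * r * ρ) = max r ρ - min r ρ := by
  rw [max_sub_min_eq_abs, ← sqrt_sq_eq_abs]
  ring_nf

/- With `r`, `ρ` the distances of two points from the origin and `t` the cosine of the angle between
them, the next two integrals are the `ℓ = 0` and `ℓ = 1` coefficients of the Laplace expansion of
`1 / |x - y|` in Legendre polynomials. -/
theorem integral_inv_sqrt_sq_add_sq_sub (hr : 0 < r) (hρ : 0 < ρ) :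
    ∫ t in (-1)..1, (√(r ^ 2 + ρ ^ 2 - 2 * r * ρ * t))⁻¹ = 2 / max r ρ := by
  rw [integral_inv_sqrt_sub_mul (by positivity) (two_mul_le_add_sq r ρ),
    sqrt_sq_add_sq_add_two_mul hr.le hρ.le, sqrt_sq_add_sq_sub_two_mul]
  rcases le_total r ρ with h | h
  · rw [max_eq_right h, min_eq_left h]
    field_simp
    ring
  · rw [max_eq_left h, min_eq_right h]
    field_simp
    ring

theorem integral_mul_inv_sqrt_sq_add_sq_sub (hr : 0 < r) (hρ : 0 < ρ) :
    ∫ t in (-1)..1, t * (√(r ^ 2 + ρ ^ 2 - 2 * r * ρ * t))⁻¹ =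
      2 / 3 * (min r ρ / max r ρ ^ 2) := by
  rw [integral_mul_inv_sqrt_sub_mul (by positivity) (two_mul_le_add_sq r ρ),
    sqrt_sq_add_sq_add_two_mul hr.le hρ.le, sqrt_sq_add_sq_sub_two_mul]
  rcases le_total r ρ with h | h
  · rw [max_eq_right h, min_eq_left h]
    field_simp
    ring
  · rw [max_eq_left h, min_eq_right h]
    field_simp
    ring

end CoulombKernel

theorem ae_radialMeasure_pos : ∀ᵐ ρ ∂radialMeasure, 0 < ρ :=
  radialMeasure_absolutelyContinuous (ae_restrict_mem measurableSet_Ioi)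

theorem integrable_radialMeasure_prod_colatitudeMeasure_coulomb {f : ℝ → ℝ}
    (hf : Integrable f radialMeasure) {r : ℝ} (hr : 0 < r) :
    Integrable (fun p => p.1 * f p.1 * (√(r ^ 2 + p.1 ^ 2 - 2 * r * p.1 * p.2))⁻¹)
      (radialMeasure.prod colatitudeMeasure) := by
  have hmeas : AEStronglyMeasurable
      (fun p : ℝ × ℝ => p.1 * f p.1 * (√(r ^ 2 + p.1 ^ 2 - 2 * r * p.1 * p.2))⁻¹)
      (radialMeasure.prod colatitudeMeasure) :=
    (measurable_fst.aestronglyMeasurable.mul hf.aestronglyMeasurable.comp_fst).mul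
      (Measurable.aestronglyMeasurable (by fun_prop))
  rw [integrable_prod_iff hmeas]
  constructor
  · filter_upwards [ae_radialMeasure_pos] with ρ hρ
    refine Integrable.const_mul (Integrable.smul_measure ?_ ENNReal.ofReal_ne_top) _
    exact (integrableOn_Icc_iff_integrableOn_Ioc).2 <|
      (intervalIntegrable_iff_integrableOn_Ioc_of_le (by norm_num)).1 <|
      intervalIntegrable_inv_sqrt_sub_mul (by positivity) (two_mul_le_add_sq r ρ)
  · refine (hf.norm.const_mul (4 * π)).mono' hmeas.norm.integral_prod_right' ?_
    filter_upwards [ae_radialMeasure_pos] with ρ hρ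
    simp only [norm_mul, norm_inv, norm_of_nonneg (sqrt_nonneg _), norm_of_nonneg hρ.le]
    have h : ρ / max r ρ ≤ 1 := div_le_one_of_le₀ (le_max_right r ρ) (by positivity)
    rw [integral_const_mul, integral_colatitudeMeasure, integral_inv_sqrt_sq_add_sq_sub hr hρ,
      norm_of_nonneg (by positivity)]
    calc ρ * ‖f ρ‖ * (2 * π * (2 / max r ρ)) = 4 * π * ‖f ρ‖ * (ρ / max r ρ) := by ring
      _ ≤ 4 * π * ‖f ρ‖ := mul_le_of_le_one_right (by positivity) h

section NewtonianPotential

variable {E : Type*} [NormedAddCommGroup E] [InnerProductSpace ℝ E]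

theorem norm_sub_eq_sqrt_cos_angle (x y : E) :
    ‖x - y‖ = √(‖x‖ ^ 2 + ‖y‖ ^ 2 - 2 * ‖x‖ * ‖y‖ * cos (angle x y)) := by
  rw [← sqrt_sq (norm_nonneg (x - y)), norm_sub_sq_real, ← cos_angle_mul_norm_mul_norm]
  ring_nf

variable [FiniteDimensional ℝ E] [MeasurableSpace E] [BorelSpace E] {x : E}

theorem integral_inner_mul_eq_zero_of_inner_eq_zero {v : E} (h : ⟪v, x⟫ = 0) (k : ℝ → ℝ → ℝ) :
    ∫ y, ⟪v, y⟫ * k ‖y‖ ‖x - y‖ = 0 := by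
  set R := (ℝ ∙ v)ᗮ.reflection
  have hRx : R x = x :=
    Submodule.reflection_mem_subspace_eq_self <|
      Submodule.mem_orthogonal_singleton_iff_inner_right.2 h
  have hneg (y : E) : ⟪v, R y⟫ * k ‖R y‖ ‖x - R y‖ = -(⟪v, y⟫ * k ‖y‖ ‖x - y‖) := by
    have hinner : ⟪v, R y⟫ = -⟪v, y⟫ := by
      rw [← R.inner_map_map v y, Submodule.reflection_orthogonalComplement_singleton_eq_neg,
        inner_neg_left, neg_neg]
    have hdist : ‖x - R y‖ = ‖x - y‖ := by rw [← R.norm_map (x - y), map_sub, hRx]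
    rw [hinner, hdist, R.norm_map, neg_mul]
  have hodd := R.measurePreserving.integral_comp R.toHomeomorph.measurableEmbedding
    fun y => ⟪v, y⟫ * k ‖y‖ ‖x - y‖
  simp_rw [hneg, integral_neg] at hodd
  linarith

theorem integral_comp_norm_cos_angle (hE : finrank ℝ E = 3) (hx : x ≠ 0) {g : ℝ × ℝ → ℝ}
    (hg : AEStronglyMeasurable g (radialMeasure.prod colatitudeMeasure)) :
    ∫ y, g (‖y‖, cos (angle x y)) = ∫ p, g p ∂radialMeasure.prod colatitudeMeasure := by
  have hmp := measurePreserving_norm_cos_angle hE hx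
  rw [← hmp.map_eq, integral_map hmp.aemeasurable (hmp.map_eq ▸ hg)]

variable {f g : ℝ → ℝ}

theorem integrable_inner_mul_comp_norm_div_norm_sub (hE : finrank ℝ E = 3)
    (hf : Integrable f radialMeasure) (hx : x ≠ 0) (v : E) :
    Integrable fun y => ⟪v, y⟫ * f ‖y‖ / ‖x - y‖ := by
  have hbase : Integrable fun y => ‖y‖ * f ‖y‖ / ‖x - y‖ := by
    simpa only [Function.comp_def, norm_sub_eq_sqrt_cos_angle, div_eq_mul_inv] using
      (measurePreserving_norm_cos_angle hE hx).integrable_comp_of_integrable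
        (integrable_radialMeasure_prod_colatitudeMeasure_coulomb hf (norm_pos_iff.2 hx))
  have hbdd (y : E) : ‖⟪v, y⟫ / ‖y‖‖ ≤ ‖v‖ := by
    rw [norm_div, norm_norm]
    exact div_le_of_le_mul₀ (norm_nonneg y) (norm_nonneg v) (norm_inner_le_norm v y)
  refine (hbase.bdd_mul (Measurable.aestronglyMeasurable (by fun_prop)) (.of_forall hbdd)).congr
    (.of_forall fun y => ?_)
  rcases eq_or_ne y 0 with rfl | hy
  · simp
  · have := norm_ne_zero_iff.2 hy
    field_simp

theorem integral_inner_self_mul_comp_norm_div_norm_sub (hE : finrank ℝ E = 3)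
    (hf : Integrable f radialMeasure) (hx : x ≠ 0) :
    ∫ y, ⟪x, y⟫ * f ‖y‖ / ‖x - y‖ =
      4 * π / 3 * ‖x‖ * ∫ ρ, ρ * f ρ * (min ‖x‖ ρ / max ‖x‖ ρ ^ 2) ∂radialMeasure := by
  set g : ℝ × ℝ → ℝ := fun p =>
    ‖x‖ * (p.1 * f p.1) * (p.2 * (√(‖x‖ ^ 2 + p.1 ^ 2 - 2 * ‖x‖ * p.1 * p.2))⁻¹)
  have hcomp (y : E) : ⟪x, y⟫ * f ‖y‖ / ‖x - y‖ = g (‖y‖, cos (angle x y)) := by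
    rw [norm_sub_eq_sqrt_cos_angle, ← cos_angle_mul_norm_mul_norm]
    ring
  have hmeas : AEStronglyMeasurable g (radialMeasure.prod colatitudeMeasure) :=
    (aestronglyMeasurable_const.mul
      (measurable_fst.aestronglyMeasurable.mul hf.aestronglyMeasurable.comp_fst)).mul
      (Measurable.aestronglyMeasurable (by fun_prop))
  have hint : Integrable g (radialMeasure.prod colatitudeMeasure) := by
    rw [← (measurePreserving_norm_cos_angle hE hx).integrable_comp hmeas]
    simpa only [Function.comp_def, hcomp] using
      integrable_inner_mul_comp_norm_div_norm_sub hE hf hx x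
  simp_rw [hcomp]
  rw [integral_comp_norm_cos_angle hE hx hmeas, integral_prod _ hint, ← integral_const_mul]
  refine integral_congr_ae ?_
  filter_upwards [ae_radialMeasure_pos] with ρ hρ
  simp only [g]
  rw [integral_const_mul, integral_colatitudeMeasure,
    integral_mul_inv_sqrt_sq_add_sq_sub (norm_pos_iff.2 hx) hρ]
  ring

theorem integral_inner_mul_comp_norm_div_norm_sub (hE : finrank ℝ E = 3)
    (hf : Integrable f radialMeasure) (hx : x ≠ 0) (v : E) :
    ∫ y, ⟪v, y⟫ * f ‖y‖ / ‖x - y‖ = 4 * π / 3 * (⟪v, x⟫ / ‖x‖) *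
      ∫ ρ, ρ * f ρ * (min ‖x‖ ρ / max ‖x‖ ρ ^ 2) ∂radialMeasure := by
  have hx' : ‖x‖ ≠ 0 := norm_ne_zero_iff.2 hx
  set c := ⟪v, x⟫ / ‖x‖ ^ 2 with hc
  set w := v - c • x with hw
  have horth : ⟪w, x⟫ = 0 := by
    rw [hw, inner_sub_left, real_inner_smul_left, real_inner_self_eq_norm_sq, hc,
      div_mul_cancel₀ _ (pow_ne_zero 2 hx'), sub_self]
  have hdecomp (y : E) : ⟪v, y⟫ * f ‖y‖ / ‖x - y‖ =
      c * (⟪x, y⟫ * f ‖y‖ / ‖x - y‖) + ⟪w, y⟫ * f ‖y‖ / ‖x - y‖ := by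
    rw [hw, inner_sub_left, real_inner_smul_left]
    ring
  have hzero : ∫ y, ⟪w, y⟫ * f ‖y‖ / ‖x - y‖ = 0 := by
    simpa only [mul_div_assoc] using
      integral_inner_mul_eq_zero_of_inner_eq_zero horth fun s d => f s / d
  have hint := integrable_inner_mul_comp_norm_div_norm_sub hE hf hx
  simp_rw [hdecomp]
  rw [integral_add ((hint x).const_mul c) (hint w), hzero, integral_const_mul,
    integral_inner_self_mul_comp_norm_div_norm_sub hE hf hx, hc]
  field_simp
  ring

theorem integral_inner_sq_mul_comp_norm (hE : finrank ℝ E = 3)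
    (hf : AEStronglyMeasurable f radialMeasure) (v : E) :
    ∫ x, ⟪v, x⟫ ^ 2 * f ‖x‖ = 4 * π / 3 * ‖v‖ ^ 2 * ∫ r, r ^ 2 * f r ∂radialMeasure := by
  rcases eq_or_ne v 0 with rfl | hv
  · simp
  set g : ℝ × ℝ → ℝ := fun p => p.1 ^ 2 * f p.1 * (‖v‖ ^ 2 * p.2 ^ 2) with hg
  have hcomp (x : E) : ⟪v, x⟫ ^ 2 * f ‖x‖ = g (‖x‖, cos (angle v x)) := by
    rw [← cos_angle_mul_norm_mul_norm]
    ring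
  have hmeas : AEStronglyMeasurable g (radialMeasure.prod colatitudeMeasure) :=
    ((measurable_fst.pow_const 2).aestronglyMeasurable.mul hf.comp_fst).mul
      (Measurable.aestronglyMeasurable (by fun_prop))
  simp_rw [hcomp]
  rw [integral_comp_norm_cos_angle hE hv hmeas, hg,
    integral_prod_mul (fun r => r ^ 2 * f r) fun t => ‖v‖ ^ 2 * t ^ 2, integral_const_mul,
    integral_colatitudeMeasure, integral_pow]
  norm_num
  ring

theorem integral_integral_inner_mul_comp_norm_div_norm_sub (hE : finrank ℝ E = 3)
    (hf : AEStronglyMeasurable f radialMeasure) (hg : Integrable g radialMeasure) (v : E) :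
    ∫ x, ∫ y, (⟪v, x⟫ * f ‖x‖) * (⟪v, y⟫ * g ‖y‖) / ‖x - y‖ = (4 * π / 3) ^ 2 * ‖v‖ ^ 2 *
      ∫ r, ∫ ρ, (r * f r) * (ρ * g ρ) * (min r ρ / max r ρ ^ 2) ∂radialMeasure ∂radialMeasure := by
  have : Nontrivial E := nontrivial_of_finrank_pos (R := ℝ) (by simp [hE])
  set P : ℝ → ℝ := fun r => ∫ ρ, ρ * g ρ * (min r ρ / max r ρ ^ 2) ∂radialMeasure
  have hP : AEStronglyMeasurable P radialMeasure :=
    AEStronglyMeasurable.integral_prod_right' (μ := radialMeasure) (ν := radialMeasure)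
      (f := fun p => p.2 * g p.2 * (min p.1 p.2 / max p.1 p.2 ^ 2)) <|
    (measurable_snd.aestronglyMeasurable.mul hg.aestronglyMeasurable.comp_snd).mul
      (Measurable.aestronglyMeasurable (by fun_prop))
  have hinner : ∀ x : E, x ≠ 0 → ∫ y, (⟪v, x⟫ * f ‖x‖) * (⟪v, y⟫ * g ‖y‖) / ‖x - y‖ =
      4 * π / 3 * (⟪v, x⟫ ^ 2 * (f ‖x‖ * P ‖x‖ / ‖x‖)) := by
    intro x hx
    simp_rw [mul_div_assoc _ (⟪v, _⟫ * g _), integral_const_mul,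
      integral_inner_mul_comp_norm_div_norm_sub hE hg hx]
    ring
  rw [integral_congr_ae ((Measure.ae_ne volume 0).mono hinner), integral_const_mul,
    integral_inner_sq_mul_comp_norm (f := fun r => f r * P r / r) hE ?_, ← mul_assoc]
  · simp_rw [mul_assoc (_ * f _), integral_const_mul]
    have hradial : ∀ᵐ r ∂radialMeasure, r ^ 2 * (f r * P r / r) = r * f r * P r := by
      filter_upwards [ae_radialMeasure_pos] with r hr
      field_simp
    rw [integral_congr_ae hradial]
    ring
  · exact (hf.mul hP).div₀ aestronglyMeasurable_id

end NewtonianPotential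

section RadialIntegrals

theorem integral_integral_eq_two_mul_of_symm {μ : Measure ℝ} [SFinite μ] [NullSingletonClass μ]
    {F : ℝ → ℝ → ℝ} (hF : Integrable ↿F (μ.prod μ)) (hsymm : ∀ r ρ, F r ρ = F ρ r) :
    ∫ r, ∫ ρ, F r ρ ∂μ ∂μ = 2 * ∫ r, ∫ ρ in Ioi r, F r ρ ∂μ ∂μ := by
  have hlt : MeasurableSet {p : ℝ × ℝ | p.1 < p.2} := measurableSet_lt measurable_fst measurable_snd
  have hgt : MeasurableSet {p : ℝ × ℝ | p.2 < p.1} := measurableSet_lt measurable_snd measurable_fst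
  have hIoi (r : ℝ) : ∫ ρ in Ioi r, F r ρ ∂μ = ∫ ρ, {p | p.1 < p.2}.indicator ↿F (r, ρ) ∂μ := by
    rw [← integral_indicator measurableSet_Ioi]
    rfl
  have hIio (r : ℝ) : ∫ ρ in Iio r, F r ρ ∂μ = ∫ ρ, {p | p.2 < p.1}.indicator ↿F (r, ρ) ∂μ := by
    rw [← integral_indicator measurableSet_Iio]
    rfl
  have hsplit : ∀ᵐ r ∂μ,
      ∫ ρ, F r ρ ∂μ = ∫ ρ in Ioi r, F r ρ ∂μ + ∫ ρ in Iio r, F r ρ ∂μ := by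
    filter_upwards [hF.prod_right_ae] with r hr
    rw [← integral_add_compl measurableSet_Ioi (f := F r) hr, compl_Ioi,
      setIntegral_congr_set Iio_ae_eq_Iic]
  have hfold : ∫ r, ∫ ρ in Iio r, F r ρ ∂μ ∂μ = ∫ r, ∫ ρ in Ioi r, F r ρ ∂μ ∂μ := by
    simp_rw [hIio, hIoi]
    rw [integral_integral_swap (f := fun r ρ => {p | p.2 < p.1}.indicator ↿F (r, ρ))
      (hF.indicator hgt)]
    simp only [indicator, mem_ofPred_eq]
    simp only [HasUncurry.uncurry, id, hsymm]
  rw [integral_congr_ae hsplit, integral_add, hfold, two_mul]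
  · simpa only [hIoi] using (hF.indicator hlt).integral_prod_left
  · simpa only [hIio] using (hF.indicator hgt).integral_prod_left

theorem integral_pow_mul_exp_neg_mul_Ioi (n : ℕ) {κ : ℝ} (hκ : 0 < κ) :
    ∫ r in Ioi 0, r ^ n * exp (-(κ * r)) = n.factorial / κ ^ (n + 1) := by
  have h := integral_rpow_mul_exp_neg_mul_Ioi (a := n + 1) (by positivity) hκ
  rw [Gamma_nat_eq_factorial, add_sub_cancel_right] at h
  simp only [rpow_natCast] at h
  rw [h]
  norm_cast
  rw [one_div, inv_pow, ← div_eq_inv_mul]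

theorem integrableOn_pow_mul_exp_neg_mul_Ioi (n : ℕ) {κ : ℝ} (hκ : 0 < κ) :
    IntegrableOn (fun r => r ^ n * exp (-(κ * r))) (Ioi 0) := by
  refine .of_integral_ne_zero ?_
  rw [integral_pow_mul_exp_neg_mul_Ioi n hκ]
  positivity

theorem integral_mul_exp_neg_mul_Ioi {κ r : ℝ} (hκ : 0 < κ) (hr : 0 ≤ r) :
    ∫ ρ in Ioi r, ρ * exp (-(κ * ρ)) = exp (-(κ * r)) * (r / κ + 1 / κ ^ 2) := by
  have hderiv : ∀ ρ ∈ Ici r, HasDerivAt (fun ρ => -((κ * ρ + 1) * exp (-(κ * ρ)) / κ ^ 2))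
      (ρ * exp (-(κ * ρ))) ρ := by
    intro ρ _
    have hlin := (hasDerivAt_id ρ).const_mul κ
    refine (((hlin.add_const 1).fun_mul hlin.fun_neg.exp).div_const (κ ^ 2)).fun_neg.congr_deriv ?_
    simp only [id]
    field_simp
    ring
  have hint : IntegrableOn (fun ρ => ρ * exp (-(κ * ρ))) (Ioi r) := by
    simpa only [pow_one] using
      (integrableOn_pow_mul_exp_neg_mul_Ioi 1 hκ).mono_set (Ioi_subset_Ioi hr)
  have hlim : Tendsto (fun ρ => -((κ * ρ + 1) * exp (-(κ * ρ)) / κ ^ 2)) atTop (𝓝 0) := by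
    have h := (tendsto_pow_mul_exp_neg_atTop_nhds_zero 1).add
      (tendsto_pow_mul_exp_neg_atTop_nhds_zero 0)
    have hκρ := h.comp (tendsto_id.const_mul_atTop hκ)
    simpa [Function.comp_def, add_mul] using (hκρ.div_const (κ ^ 2)).neg
  rw [integral_Ioi_of_hasDerivAt_of_tendsto' hderiv hint hlim]
  field_simp
  ring

theorem integrable_min_pow_three_mul_exp_neg {κ : ℝ} (hκ : 0 < κ) :
    Integrable (fun p : ℝ × ℝ =>
        p.1 * exp (-(κ * p.1)) * (p.2 * exp (-(κ * p.2))) * min p.1 p.2 ^ 3)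
      ((volume.restrict (Ioi 0)).prod (volume.restrict (Ioi 0))) := by
  refine ((integrableOn_pow_mul_exp_neg_mul_Ioi 4 hκ).mul_prod
    (integrableOn_pow_mul_exp_neg_mul_Ioi 1 hκ)).mono'
    (Measurable.aestronglyMeasurable (by fun_prop)) ?_
  rw [Measure.prod_restrict]
  filter_upwards [ae_restrict_mem (measurableSet_Ioi.prod measurableSet_Ioi)] with p hp
  have h₁ : 0 < p.1 := hp.1
  have h₂ : 0 < p.2 := hp.2
  rw [norm_of_nonneg (by positivity)]
  calc p.1 * exp (-(κ * p.1)) * (p.2 * exp (-(κ * p.2))) * min p.1 p.2 ^ 3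
      ≤ p.1 * exp (-(κ * p.1)) * (p.2 * exp (-(κ * p.2))) * p.1 ^ 3 := by
        gcongr
        exact min_le_left _ _
    _ = p.1 ^ 4 * exp (-(κ * p.1)) * (p.2 ^ 1 * exp (-(κ * p.2))) := by ring

theorem integral_integral_min_pow_three_mul_exp_neg {κ : ℝ} (hκ : 0 < κ) :
    ∫ r in Ioi 0, ∫ ρ in Ioi 0,
        r * exp (-(κ * r)) * (ρ * exp (-(κ * ρ))) * min r ρ ^ 3 = 21 / (4 * κ ^ 7) := by
  have hsymm (r ρ : ℝ) : r * exp (-(κ * r)) * (ρ * exp (-(κ * ρ))) * min r ρ ^ 3 =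
      ρ * exp (-(κ * ρ)) * (r * exp (-(κ * r))) * min ρ r ^ 3 := by
    rw [min_comm r ρ, mul_comm (r * _)]
  have hinner : ∀ r ∈ Ioi (0 : ℝ), ∫ ρ in Ioi r,
      r * exp (-(κ * r)) * (ρ * exp (-(κ * ρ))) * min r ρ ^ 3 ∂volume.restrict (Ioi 0) =
      1 / κ * (r ^ 5 * exp (-(2 * κ * r))) + 1 / κ ^ 2 * (r ^ 4 * exp (-(2 * κ * r))) := by
    intro r hr
    have hr' : 0 < r := hr
    rw [Measure.restrict_restrict measurableSet_Ioi, Ioi_inter_Ioi, sup_of_le_left hr'.le]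
    calc ∫ ρ in Ioi r, r * exp (-(κ * r)) * (ρ * exp (-(κ * ρ))) * min r ρ ^ 3
        = ∫ ρ in Ioi r, r ^ 4 * exp (-(κ * r)) * (ρ * exp (-(κ * ρ))) := by
          refine setIntegral_congr_fun measurableSet_Ioi fun ρ hρ => ?_
          simp only [min_eq_left (mem_Ioi.1 hρ).le]
          ring
      _ = _ := by
          rw [integral_const_mul, integral_mul_exp_neg_mul_Ioi hκ hr'.le,
            show -(2 * κ * r) = -(κ * r) + -(κ * r) by ring, exp_add]
          ring
  have h2κ : 0 < 2 * κ := by positivity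
  rw [integral_integral_eq_two_mul_of_symm (integrable_min_pow_three_mul_exp_neg hκ) hsymm,
    setIntegral_congr_fun measurableSet_Ioi hinner,
    integral_add ((integrableOn_pow_mul_exp_neg_mul_Ioi 5 h2κ).const_mul _)
      ((integrableOn_pow_mul_exp_neg_mul_Ioi 4 h2κ).const_mul _),
    integral_const_mul, integral_const_mul, integral_pow_mul_exp_neg_mul_Ioi 5 h2κ,
    integral_pow_mul_exp_neg_mul_Ioi 4 h2κ]
  simp only [Nat.factorial]
  push_cast
  field_simp
  norm_num

end RadialIntegrals

section ExponentialDensity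

variable {κ : ℝ}

theorem integrable_exp_neg_mul_radialMeasure (hκ : 0 < κ) :
    Integrable (fun r => exp (-(κ * r))) radialMeasure :=
  integrable_radialMeasure_iff.2 (integrableOn_pow_mul_exp_neg_mul_Ioi 2 hκ)

theorem integral_integral_mul_exp_neg_mul_min_div_max_sq (hκ : 0 < κ) :
    ∫ r, ∫ ρ, (r * exp (-(κ * r))) * (ρ * exp (-(κ * ρ))) * (min r ρ / max r ρ ^ 2)
      ∂radialMeasure ∂radialMeasure = 21 / (4 * κ ^ 7) := by
  have hkernel : ∀ r ∈ Ioi (0 : ℝ), ∀ ρ,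
      r ^ 2 * (ρ ^ 2 * (r * exp (-(κ * r)) * (ρ * exp (-(κ * ρ))) * (min r ρ / max r ρ ^ 2))) =
        r * exp (-(κ * r)) * (ρ * exp (-(κ * ρ))) * min r ρ ^ 3 := by
    intro r hr ρ
    have hmax : 0 < max r ρ := lt_max_of_lt_left hr
    have hprod : r * ρ = min r ρ * max r ρ := (min_mul_max r ρ).symm
    field_simp
    rw [← mul_pow, hprod]
    ring
  rw [integral_radialMeasure, ← integral_integral_min_pow_three_mul_exp_neg hκ]
  refine setIntegral_congr_fun measurableSet_Ioi fun r hr => ?_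
  rw [integral_radialMeasure, ← integral_const_mul]
  simp only [hkernel r hr]

variable {E : Type*} [NormedAddCommGroup E] [InnerProductSpace ℝ E] [FiniteDimensional ℝ E]
  [MeasurableSpace E] [BorelSpace E]

theorem integral_integral_inner_mul_exp_neg_norm_div_norm_sub (hE : finrank ℝ E = 3)
    (hκ : 0 < κ) (v : E) :
    ∫ x, ∫ y, (⟪v, x⟫ * exp (-(κ * ‖x‖))) * (⟪v, y⟫ * exp (-(κ * ‖y‖))) / ‖x - y‖ =
      28 * π ^ 2 / (3 * κ ^ 7) * ‖v‖ ^ 2 := by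
  have hint := integrable_exp_neg_mul_radialMeasure hκ
  rw [integral_integral_inner_mul_comp_norm_div_norm_sub hE hint.aestronglyMeasurable hint,
    integral_integral_mul_exp_neg_mul_min_div_max_sq hκ]
  ring

end ExponentialDensity

theorem rpow_nat_div_two_sq {Z : ℝ} (hZ : 0 ≤ Z) (n : ℕ) : (Z ^ ((n : ℝ) / 2)) ^ 2 = Z ^ n := by
  rw [← rpow_mul_natCast hZ, Nat.cast_ofNat, div_mul_cancel₀ _ two_ne_zero, rpow_natCast]

theorem slater_normalization_sq {Z₁ Z₃ : ℝ} (hZ₁ : 0 ≤ Z₁) (hZ₃ : 0 ≤ Z₃) :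
    (Z₁ ^ ((3 : ℝ) / 2) / √π * (Z₃ ^ ((5 : ℝ) / 2) / √(32 * π))) ^ 2 =
      Z₁ ^ 3 * Z₃ ^ 5 / (32 * π ^ 2) := by
  have h₁ : (Z₁ ^ ((3 : ℝ) / 2)) ^ 2 = Z₁ ^ 3 := rpow_nat_div_two_sq hZ₁ 3
  have h₃ : (Z₃ ^ ((5 : ℝ) / 2)) ^ 2 = Z₃ ^ 5 := rpow_nat_div_two_sq hZ₃ 5
  rw [mul_pow, div_pow, div_pow, h₁, h₃, sq_sqrt pi_pos.le, sq_sqrt (by positivity)]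
  ring

/-- The exchange integral `(13|31)` between the 1s and 2p₃ Slater orbitals. -/
theorem exchange_1s_2p (Z₁ Z₃ : ℝ) (hZ₁ : 0 < Z₁) (hZ₃ : 0 < Z₃)
    (φ1 φ3 : EuclideanSpace ℝ (Fin 3) → ℝ)
    (hφ1 : ∀ x, φ1 x = Z₁ ^ ((3:ℝ)/2) / Real.sqrt Real.pi * Real.exp (-Z₁ * ‖x‖))
    (hφ3 : ∀ x, φ3 x = Z₃ ^ ((5:ℝ)/2) / Real.sqrt (32 * Real.pi) * x 2 *
      Real.exp (-Z₃ * ‖x‖ / 2)) :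
    ∫ x : EuclideanSpace ℝ (Fin 3), ∫ y : EuclideanSpace ℝ (Fin 3),
        (φ1 x * φ3 x) * (φ3 y * φ1 y) / ‖x - y‖
      = 112 * Z₁ ^ 3 * Z₃ ^ 5 / (3 * (2 * Z₁ + Z₃) ^ 7) := by
  set C := Z₁ ^ ((3 : ℝ) / 2) / √π * (Z₃ ^ ((5 : ℝ) / 2) / √(32 * π)) with hC
  set κ := Z₁ + Z₃ / 2 with hκ
  set v : EuclideanSpace ℝ (Fin 3) := EuclideanSpace.single 2 C with hv
  have hnorm : ‖v‖ ^ 2 = Z₁ ^ 3 * Z₃ ^ 5 / (32 * π ^ 2) := by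
    rw [hv, PiLp.norm_single, norm_eq_abs, sq_abs, hC, slater_normalization_sq hZ₁.le hZ₃.le]
  have hdensity (x) : φ1 x * φ3 x = ⟪v, x⟫ * exp (-(κ * ‖x‖)) := by
    have hexp : exp (-(κ * ‖x‖)) = exp (-Z₁ * ‖x‖) * exp (-Z₃ * ‖x‖ / 2) := by
      rw [← exp_add, hκ]
      ring_nf
    have hcoord : ⟪v, x⟫ = C * x 2 := by simp [hv, EuclideanSpace.inner_single_left]
    rw [hφ1, hφ3, hexp, hcoord]
    ring
  simp_rw [fun y => mul_comm (φ3 y), hdensity]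
  rw [integral_integral_inner_mul_exp_neg_norm_div_norm_sub finrank_euclideanSpace_fin
    (by positivity), hnorm, hκ]
  field_simp
  norm_num
end
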